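/- Let H and G be real Hilbert spaces, let f ∈ Γ0(H), g ∈ Γ0(G), l ∈ Γ0(G), let h: H → ℝ be convex and Gâteaux differentiable on all of H, assume dom l* = G, and let L ∈ B(H, G). Suppose there exists x̄ ∈ H with 0 ∈ ∂f(x̄) + ∇h(x̄) + L*(∂g □ ∂l)(L x̄). Then every x ∈ H satisfying 0 ∈ ∂f(x) + ∇h(x) + L*(∂g □ ∂l)(L x) is a minimizer of f + h + (g □ l) ∘ L; i.e. zer(∂f + ∇h + L*(∂g □ ∂l)L) ⊆ argmin (f + h + (g □ l) ∘ L). -/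

import Mathlib

open Pointwise
open scoped RealInnerProductSpace

/-- `f` belongs to `Γ₀(H)`: proper, nowhere `⊥`, lower semicontinuous and convex,
with values in `(-∞, +∞]` modelled by `EReal`. -/
def Gamma0 {H : Type*} [NormedAddCommGroup H] [InnerProductSpace ℝ H]
    (f : H → EReal) : Prop :=
  (∃ x, f x ≠ ⊤) ∧ (∀ x, f x ≠ ⊥) ∧ LowerSemicontinuous f ∧
    ∀ x y : H, ∀ t : ℝ, 0 ≤ t → t ≤ 1 →
      f (t • x + (1 - t) • y) ≤ (t : EReal) * f x + ((1 - t : ℝ) : EReal) * f y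

/-- The Moreau subdifferential of an `EReal`-valued function. -/
def subdiff {H : Type*} [NormedAddCommGroup H] [InnerProductSpace ℝ H]
    (f : H → EReal) (x : H) : Set H :=
  {u | ∀ y : H, ((⟪y - x, u⟫ : ℝ) : EReal) + f x ≤ f y}

/-- The Fenchel conjugate of an `EReal`-valued function. -/
noncomputable def conj {H : Type*} [NormedAddCommGroup H] [InnerProductSpace ℝ H]
    (f : H → EReal) (v : H) : EReal :=
  ⨆ x : H, ((⟪x, v⟫ : ℝ) : EReal) - f x

/-- The inf-convolution of two `EReal`-valued functions. -/
noncomputable def infConv {H : Type*} [NormedAddCommGroup H]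
    (f g : H → EReal) (x : H) : EReal :=
  ⨅ y : H, f y + g (x - y)

/-- The set-valued inverse. -/
def svInv {K : Type*} (A : K → Set K) : K → Set K := fun u => {x | u ∈ A x}

/-- The parallel sum `A □ B = (A⁻¹ + B⁻¹)⁻¹` of set-valued operators. -/
def parSum {K : Type*} [AddCommMonoid K] (A B : K → Set K) : K → Set K :=
  svInv (fun u => svInv A u + svInv B u)

/-!
A Gâteaux gradient of a convex function is a subgradient, and adding subgradient inequalities or
moving `L` across the inner product gives `∂φ + ∂ψ ⊆ ∂(φ + ψ)`, `∂g □ ∂l ⊆ ∂(g □ l)` and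
`L*(∂φ)L ⊆ ∂(φ ∘ L)`. Hence `∂f + ∇h + L*(∂g □ ∂l)L ⊆ ∂(f + h + (g □ l) ∘ L)`, and Fermat's rule
concludes. The inequalities can be added directly in `EReal`, because its addition is commutative,
associative and monotone despite the convention `⊤ + ⊥ = ⊥`.
-/

theorem infConv_add_le {E : Type*} [NormedAddCommGroup E] (g l : E → EReal) (a b : E) :
    infConv g l (a + b) ≤ g a + l b :=
  calc infConv g l (a + b) ≤ g a + l (a + b - a) := iInf_le _ a
    _ = g a + l b := by rw [add_sub_cancel_left]

section SubdifferentialCalculus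

variable {E : Type*} [NormedAddCommGroup E] [InnerProductSpace ℝ E]
  {F : Type*} [NormedAddCommGroup F] [InnerProductSpace ℝ F]

theorem zero_mem_subdiff_iff_isMinOn {φ : E → EReal} {x : E} :
    0 ∈ subdiff φ x ↔ IsMinOn φ Set.univ x := by
  simp [subdiff, isMinOn_univ_iff]

theorem subdiff_add_subset (φ ψ : E → EReal) (x : E) :
    subdiff φ x + subdiff ψ x ⊆ subdiff (φ + ψ) x := by
  rintro _ ⟨u, hu, v, hv, rfl⟩ y
  calc ((⟪y - x, u + v⟫ : ℝ) : EReal) + (φ x + ψ x)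
      = ((⟪y - x, u⟫ : ℝ) + φ x) + ((⟪y - x, v⟫ : ℝ) + ψ x) := by
        rw [inner_add_right, EReal.coe_add, add_add_add_comm]
    _ ≤ φ y + ψ y := add_le_add (hu y) (hv y)

theorem parSum_subdiff_subset_subdiff_infConv (g l : E → EReal) (x : E) :
    parSum (subdiff g) (subdiff l) x ⊆ subdiff (infConv g l) x := by
  rintro v ⟨a, ha : v ∈ subdiff g a, b, hb : v ∈ subdiff l b, rfl⟩ y
  refine le_iInf fun w ↦ ?_
  have sub_decomposition : y - (a + b) = (w - a) + (y - w - b) := by abel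
  calc ((⟪y - (a + b), v⟫ : ℝ) : EReal) + infConv g l (a + b)
      ≤ (⟪y - (a + b), v⟫ : ℝ) + (g a + l b) := by
        gcongr
        exact infConv_add_le g l a b
    _ = ((⟪w - a, v⟫ : ℝ) + g a) + ((⟪y - w - b, v⟫ : ℝ) + l b) := by
        rw [sub_decomposition, inner_add_left, EReal.coe_add, add_add_add_comm]
    _ ≤ g w + l (y - w) := add_le_add (ha w) (hb (y - w))

theorem image_subdiff_subset_subdiff_comp {L : E → F} {Lstar : F → E}
    (hadj : (innerₗ E).IsAdjointPair (innerₗ F) L Lstar) (φ : F → EReal) (x : E) :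
    Lstar '' subdiff φ (L x) ⊆ subdiff (φ ∘ L) x := by
  rintro _ ⟨v, hv, rfl⟩ y
  have inner_map (z : E) : ⟪L z, v⟫ = ⟪z, Lstar v⟫ := hadj z v
  have inner_sub_map : ⟪y - x, Lstar v⟫ = ⟪L y - L x, v⟫ := by
    simp only [inner_sub_left, inner_map]
  rw [inner_sub_map]
  exact hv (L y)

theorem mem_subdiff_of_convexOn_of_hasLineDerivAt {h : E → ℝ} (hconv : ConvexOn ℝ Set.univ h)
    {x p : E} (hp : ∀ v, HasLineDerivAt ℝ h ⟪p, v⟫ x v) :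
    p ∈ subdiff (fun z ↦ (h z : EReal)) x := by
  intro y
  have convexOn_line : ConvexOn ℝ Set.univ fun t : ℝ ↦ h (x + t • (y - x)) := by
    simpa [Function.comp_def, AffineMap.lineMap_apply, add_comm] using
      hconv.comp_affineMap (AffineMap.lineMap x y : ℝ →ᵃ[ℝ] E)
  have inner_le_sub : ⟪p, y - x⟫ ≤ h y - h x := by
    simpa [slope_def_field] using
      convexOn_line.le_slope_of_hasDerivAt (Set.mem_univ 0) (Set.mem_univ 1) one_pos
        (hp (y - x))
  rw [← EReal.coe_add, EReal.coe_le_coe_iff, real_inner_comm]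
  linarith

theorem subdiff_add_gradient_add_image_parSum_subset (f : E → EReal) (g l : F → EReal)
    {h : E → ℝ} (hconv : ConvexOn ℝ Set.univ h) {x p : E}
    (hp : ∀ v, HasLineDerivAt ℝ h ⟪p, v⟫ x v) {L : E → F} {Lstar : F → E}
    (hadj : (innerₗ E).IsAdjointPair (innerₗ F) L Lstar) :
    subdiff f x + {p} + Lstar '' parSum (subdiff g) (subdiff l) (L x) ⊆
      subdiff (f + (fun z ↦ (h z : EReal)) + infConv g l ∘ L) x := by
  have gradient_subset : {p} ⊆ subdiff (fun z ↦ (h z : EReal)) x :=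
    Set.singleton_subset_iff.2 (mem_subdiff_of_convexOn_of_hasLineDerivAt hconv hp)
  have image_subset : Lstar '' parSum (subdiff g) (subdiff l) (L x) ⊆
      subdiff (infConv g l ∘ L) x :=
    (Set.image_mono (parSum_subdiff_subset_subdiff_infConv g l (L x))).trans
      (image_subdiff_subset_subdiff_comp hadj (infConv g l) x)
  calc subdiff f x + {p} + Lstar '' parSum (subdiff g) (subdiff l) (L x)
      ⊆ subdiff f x + subdiff (fun z ↦ (h z : EReal)) x + subdiff (infConv g l ∘ L) x :=
        Set.add_subset_add (Set.add_subset_add_left gradient_subset) image_subset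
    _ ⊆ subdiff (f + fun z ↦ (h z : EReal)) x + subdiff (infConv g l ∘ L) x :=
        Set.add_subset_add_right (subdiff_add_subset f _ x)
    _ ⊆ subdiff (f + (fun z ↦ (h z : EReal)) + infConv g l ∘ L) x :=
        subdiff_add_subset _ _ x

theorem stmt_16_general (f : E → EReal) (g l : F → EReal)
    {h : E → ℝ} (hconv : ConvexOn ℝ Set.univ h) {x p : E}
    (hp : ∀ v, HasLineDerivAt ℝ h ⟪p, v⟫ x v) {L : E → F} {Lstar : F → E}
    (hadj : (innerₗ E).IsAdjointPair (innerₗ F) L Lstar)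
    (hx : 0 ∈ subdiff f x + {p} + Lstar '' parSum (subdiff g) (subdiff l) (L x)) :
    IsMinOn (fun y ↦ f y + (h y : EReal) + infConv g l (L y)) Set.univ x :=
  zero_mem_subdiff_iff_isMinOn.1
    (subdiff_add_gradient_add_image_parSum_subset f g l hconv hp hadj hx)

end SubdifferentialCalculus

/-- if the inclusion `0 ∈ ∂f(x̄) + ∇h(x̄) + L*(∂g □ ∂l)(L x̄)` has a solution,
then every solution of this inclusion minimizes `f + h + (g □ l) ∘ L`. -/
theorem stmt_16
    {H : Type*} [NormedAddCommGroup H] [InnerProductSpace ℝ H] [CompleteSpace H]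
    {G : Type*} [NormedAddCommGroup G] [InnerProductSpace ℝ G] [CompleteSpace G]
    (f : H → EReal) (g l : G → EReal)
    (hf : Gamma0 f) (hg : Gamma0 g) (hl : Gamma0 l)
    (h : H → ℝ) (hconv : ConvexOn ℝ Set.univ h)
    (h' : H → H) (hh' : ∀ x : H, HasGradientAt h (h' x) x)
    (hdomlstar : ∀ v : G, conj l v ≠ ⊤)
    (L : H →L[ℝ] G)
    (hqual : ∃ xbar : H,
      (0 : H) ∈ subdiff f xbar + {h' xbar} +
        (⇑(ContinuousLinearMap.adjoint L)) '' parSum (subdiff g) (subdiff l) (L xbar)) :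
    ∀ x : H,
      (0 : H) ∈ subdiff f x + {h' x} +
          (⇑(ContinuousLinearMap.adjoint L)) '' parSum (subdiff g) (subdiff l) (L x) →
        ∀ y : H,
          f x + ((h x : ℝ) : EReal) + infConv g l (L x)
            ≤ f y + ((h y : ℝ) : EReal) + infConv g l (L y) := by
  intro x hx
  exact isMinOn_univ_iff.1 <| stmt_16_general f g l hconv (hh' x).hasFDerivAt.hasLineDerivAt
    (fun z v ↦ (L.adjoint_inner_right z v).symm) hx
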